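/- arXiv:1112.3797 — 2 statements merged into one kernel-verified Lean document; each statement's English description precedes it below -/
import Mathlib

section
/- The set {a ∈ ℝ : J̃(a) > 0} is nonempty and bounded above; in particular its supremum γ̃ satisfies 0 < γ̃ < ∞. -/
/-!
Since `inf ψ ≤ 0 < ψ 0` on `[0, 1]`, some `s > 0` has `ψ s < ψ 0`. To the left of `0` the convex
function `ψ` lies above the line through `(0, ψ 0)` and `(s, ψ s)`. Hence
`ψ (-t) - a * t ≥ ψ 0 > 0` for all `t ≥ 0`, where `a > 0` is minus the slope of that line.
In the other direction, `t = 1` forces every admissible `a` to be less than `ψ (-1)`.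
-/

open Set

/-- The set `{a : J̃(a) > 0}` whose supremum is the constant `γ̃`. Positivity of
`J̃(a) = inf_{t ≥ 0} (ψ(-t) - a·t)` is encoded as a uniform lower bound `δ > 0`, so that the
possible value `-∞` of the infimum needs no extended reals. -/
def bigginsSet (ψ : ℝ → ℝ) : Set ℝ :=
  {a | ∃ δ > 0, ∀ t ≥ (0 : ℝ), δ ≤ ψ (-t) - a * t}

theorem exists_mem_Ioc_lt_of_sInf_image_Icc_lt {α β : Type*} [PartialOrder α]
    [ConditionallyCompleteLinearOrder β] {f : α → β} {a b : α} (hab : a ≤ b)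
    (h : sInf (f '' Icc a b) < f a) : ∃ x ∈ Ioc a b, f x < f a := by
  obtain ⟨_, ⟨x, hx, rfl⟩, hlt⟩ := exists_lt_of_csInf_lt ((nonempty_Icc.2 hab).image f) h
  have hne : a ≠ x := fun hax => hlt.ne (congrArg f hax.symm)
  exact ⟨x, ⟨hx.1.lt_of_ne hne, hx.2⟩, hlt⟩

theorem add_slope_mul_sub_le_of_convexOn {𝕜 : Type*} [Field 𝕜] [LinearOrder 𝕜]
    [IsStrictOrderedRing 𝕜] {S : Set 𝕜} {f : 𝕜 → 𝕜} (hf : ConvexOn 𝕜 S f) {x y z : 𝕜}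
    (hx : x ∈ S) (hz : z ∈ S) (hxy : x ≤ y) (hyz : y < z) :
    f y + slope f y z * (x - y) ≤ f x := by
  rcases hxy.eq_or_lt with rfl | hxy
  · simp
  · have hslope : (f y - f x) / (y - x) ≤ slope f y z := by
      simpa only [slope_def_field] using hf.slope_mono_adjacent hx hz hxy hyz
    rw [div_le_iff₀ (sub_pos.2 hxy)] at hslope
    linarith

theorem lt_of_mem_bigginsSet {ψ : ℝ → ℝ} {a : ℝ} (ha : a ∈ bigginsSet ψ) : a < ψ (-1) := by
  obtain ⟨δ, hδ, h⟩ := ha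
  linarith [h 1 zero_le_one]

theorem bddAbove_bigginsSet (ψ : ℝ → ℝ) : BddAbove (bigginsSet ψ) :=
  ⟨ψ (-1), fun _ ha => (lt_of_mem_bigginsSet ha).le⟩

theorem neg_slope_mem_bigginsSet {ψ : ℝ → ℝ} {s : ℝ} (hψ : ConvexOn ℝ (Iic s) ψ)
    (hψ0 : 0 < ψ 0) (hs : 0 < s) : -slope ψ 0 s ∈ bigginsSet ψ := by
  refine ⟨ψ 0, hψ0, fun t ht => ?_⟩
  have hneg : -t ≤ 0 := neg_nonpos.2 ht
  have hsecant : ψ 0 + slope ψ 0 s * (-t - 0) ≤ ψ (-t) :=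
    add_slope_mul_sub_le_of_convexOn hψ (hneg.trans hs.le) self_mem_Iic hneg hs
  linarith

theorem biggins_constant_exists_general {ψ : ℝ → ℝ} {s : ℝ} (hψ : ConvexOn ℝ (Iic s) ψ)
    (hψ0 : 0 < ψ 0) (hs : 0 < s) (hlt : ψ s < ψ 0) :
    (bigginsSet ψ).Nonempty ∧ BddAbove (bigginsSet ψ) ∧ 0 < sSup (bigginsSet ψ) := by
  have hmem : -slope ψ 0 s ∈ bigginsSet ψ := neg_slope_mem_bigginsSet hψ hψ0 hs
  have hpos : 0 < -slope ψ 0 s := neg_pos.2 ((slope_neg_iff_of_le hs.le).2 hlt)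
  have hbdd : BddAbove (bigginsSet ψ) := bddAbove_bigginsSet ψ
  exact ⟨⟨_, hmem⟩, hbdd, hpos.trans_le (le_csSup hbdd hmem)⟩

/-- Let `ψ : ℝ → ℝ` be convex with `ψ(0) > 0` and `inf_{t∈[0,1]} ψ(t) ≤ 0`.
With `J̃(a) := inf_{t ≥ 0} (ψ(-t) - a·t)`, the set `{a : J̃(a) > 0}`
(meaning: there is `δ > 0` with `ψ(-t) - a·t ≥ δ` for all `t ≥ 0`) is nonempty
and bounded above; in particular `γ̃ := sup{a : J̃(a) > 0}` satisfies `0 < γ̃ < ∞`. -/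
theorem biggins_constant_exists
    (ψ : ℝ → ℝ) (hconv : ConvexOn ℝ Set.univ ψ) (hψ0 : 0 < ψ 0)
    (hinf : sInf (ψ '' Set.Icc (0 : ℝ) 1) ≤ 0) :
    {a : ℝ | ∃ δ > 0, ∀ t ≥ (0 : ℝ), δ ≤ ψ (-t) - a * t}.Nonempty ∧
    BddAbove {a : ℝ | ∃ δ > 0, ∀ t ≥ (0 : ℝ), δ ≤ ψ (-t) - a * t} ∧
    0 < sSup {a : ℝ | ∃ δ > 0, ∀ t ≥ (0 : ℝ), δ ≤ ψ (-t) - a * t} := by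
  obtain ⟨s, hs, hlt⟩ :=
    exists_mem_Ioc_lt_of_sInf_image_Icc_lt zero_le_one (hinf.trans_lt hψ0)
  exact biggins_constant_exists_general (hconv.subset (subset_univ _) (convex_Iic s)) hψ0 hs.1 hlt
end

section
/- If in addition μ([α, ∞)) ≥ 1, then γ = α. -/
open MeasureTheory

/-!
Write `Λ` for the cumulant generating function. If `a > α`, the bound `Λ t ≤ log μ(ℝ) + t α` makes
`Λ t - a t` negative for large `t`. If `a < α`, Chernoff's inequality
`log μ[b, ∞) + t b ≤ Λ t` is used at two levels: `b = α` gives `Λ t - a t ≥ (α - a) t`, where the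
atom of mass at least one at `α` ensures that nothing is lost, while a level `b` so low that
`μ[b, ∞) > 1` keeps `Λ t - a t` away from zero for `t` near zero.
-/

section Speeds

/-- The speeds `a` for which `Λ t - a * t` is bounded away from zero from below on `[0, ∞)`.
When `Λ` is the log-Laplace transform of a branching random walk, the expected number of particles
beyond speed `a` grows exponentially, and the supremum of these speeds is the velocity `γ`. -/
def subcriticalSpeeds (Λ : ℝ → ℝ) : Set ℝ :=
  {a | ∃ δ > 0, ∀ t ≥ (0 : ℝ), δ ≤ Λ t - a * t}

variable {Λ : ℝ → ℝ} {a b c d : ℝ}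

lemma le_of_mem_subcriticalSpeeds (ha : a ∈ subcriticalSpeeds Λ)
    (hΛ : ∀ t ≥ 0, Λ t ≤ c + t * b) : a ≤ b := by
  obtain ⟨δ, hδ, hgap⟩ := ha
  by_contra! hba
  have hab : 0 < a - b := sub_pos.2 hba
  have ht : 0 ≤ |c| / (a - b) := by positivity
  have hcancel : |c| / (a - b) * (a - b) = |c| := div_mul_cancel₀ _ hab.ne'
  linarith [hgap _ ht, hΛ _ ht, le_abs_self c]

lemma mem_subcriticalSpeeds_of_lt (hab : a < b) (hΛb : ∀ t ≥ 0, t * b ≤ Λ t)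
    (hc : 0 < c) (hΛd : ∀ t ≥ 0, c + t * d ≤ Λ t) : a ∈ subcriticalSpeeds Λ := by
  have hba : 0 < b - a := sub_pos.2 hab
  have hsum : 0 < (b - a) + |d - a| := by positivity
  -- The slopes `b - a` and `-|d - a|` cancel in the average with weights `|d - a|` and `b - a`.
  refine ⟨(b - a) * c / ((b - a) + |d - a|), by positivity, fun t ht ↦ ?_⟩
  have hlarge : (b - a) * t ≤ Λ t - a * t := by linarith [hΛb t ht]
  have hsmall : c - |d - a| * t ≤ Λ t - a * t := by
    linarith [hΛd t ht, mul_le_mul_of_nonneg_right (neg_abs_le (d - a)) ht]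
  rw [div_le_iff₀ hsum]
  linarith [mul_le_mul_of_nonneg_left hlarge (abs_nonneg (d - a)),
    mul_le_mul_of_nonneg_left hsmall hba.le]

end Speeds

section TailMeasure

variable {Ω β : Type*} {mΩ : MeasurableSpace Ω} {μ : Measure Ω} {X : Ω → β}

lemma exists_lt_measure_ge [Preorder β] [IsCodirectedOrder β]
    [(Filter.atBot : Filter β).IsCountablyGenerated] {m : ENNReal} (hm : m < μ Set.univ) :
    ∃ b, m < μ {ω | b ≤ X ω} := by
  have hanti : Antitone fun b ↦ {ω | b ≤ X ω} := fun _ _ hbc _ hω ↦ hbc.trans hω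
  have hcover : ⋃ b, {ω | b ≤ X ω} = Set.univ :=
    Set.eq_univ_of_forall fun ω ↦ Set.mem_iUnion.2 ⟨X ω, le_rfl⟩
  rwa [← hcover, hanti.measure_iUnion, lt_iSup_iff] at hm

lemma ae_le_iff_mem_upperBounds [LinearOrder β] [TopologicalSpace β] [OrderTopology β]
    [DenselyOrdered β] [NoMaxOrder β] [FirstCountableTopology β] {a : β} :
    (∀ᵐ ω ∂μ, X ω ≤ a) ↔ a ∈ upperBounds {s | 0 < μ {ω | s ≤ X ω}} := by
  constructor
  · intro hXa s hs
    obtain ⟨ω, hsω, hωa⟩ := ((frequently_ae_iff.2 hs.ne').and_eventually hXa).exists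
    exact hsω.trans hωa
  · intro ha
    obtain ⟨u, -, hau, hu⟩ := exists_seq_strictAnti_tendsto a
    have hlt (n : ℕ) : ∀ᵐ ω ∂μ, X ω < u n := by
      have hnull : μ {ω | u n ≤ X ω} = 0 := nonpos_iff_eq_zero.1 <|
        not_lt.1 fun hpos ↦ (hau n).not_ge (ha hpos)
      simpa only [ae_iff, not_lt] using hnull
    filter_upwards [ae_all_iff.2 hlt] with ω hω using ge_of_tendsto' hu fun n ↦ (hω n).le

end TailMeasure

section Cgf

open ProbabilityTheory

variable {Ω : Type*} {mΩ : MeasurableSpace Ω} {μ : Measure Ω} [IsFiniteMeasure μ] {X : Ω → ℝ}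
  {a b t : ℝ}

lemma log_measure_ge_add_mul_le_cgf (ht : 0 ≤ t)
    (hint : Integrable (fun ω ↦ Real.exp (t * X ω)) μ) (hpos : 0 < μ.real {ω | b ≤ X ω}) :
    Real.log (μ.real {ω | b ≤ X ω}) + t * b ≤ cgf X μ t := by
  have hchernoff := (Real.log_le_iff_le_exp hpos).2 (measure_ge_le_exp_cgf b ht hint)
  linarith

lemma cgf_le_log_measure_univ_add_mul [NeZero μ] (ht : 0 ≤ t)
    (hint : Integrable (fun ω ↦ Real.exp (t * X ω)) μ) (hXb : ∀ᵐ ω ∂μ, X ω ≤ b) :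
    cgf X μ t ≤ Real.log (μ.real Set.univ) + t * b := by
  calc cgf X μ t
    _ ≤ cgf (fun _ ↦ b) μ t :=
      Real.log_le_log (mgf_pos' (NeZero.ne μ) hint)
        (mgf_mono_of_nonneg hXb ht (integrable_const _))
    _ = Real.log (μ.real Set.univ) + t * b := cgf_const' (NeZero.ne μ) b

theorem isLUB_subcriticalSpeeds_cgf (hX : AEMeasurable X μ) (hmass : 1 < μ Set.univ)
    (hXa : ∀ᵐ ω ∂μ, X ω ≤ a) (hatom : 1 ≤ μ {ω | a ≤ X ω}) :
    IsLUB (subcriticalSpeeds (cgf X μ)) a := by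
  have : NeZero μ := ⟨by rintro rfl; simp at hmass⟩
  have hint (t : ℝ) (ht : t ≥ 0) : Integrable (fun ω ↦ Real.exp (t * X ω)) μ :=
    integrable_exp_mul_of_le t a ht hX hXa
  obtain ⟨d, hd⟩ := exists_lt_measure_ge (X := X) hmass
  have hatom' : 1 ≤ μ.real {ω | a ≤ X ω} :=
    (ENNReal.ofReal_le_iff_le_toReal (measure_ne_top _ _)).1 (by simpa using hatom)
  have hd' : 1 < μ.real {ω | d ≤ X ω} :=
    (ENNReal.ofReal_lt_iff_lt_toReal zero_le_one (measure_ne_top _ _)).1 (by simpa using hd)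
  have hsteep (t : ℝ) (ht : t ≥ 0) : t * a ≤ cgf X μ t := by
    linarith [Real.log_nonneg hatom',
      log_measure_ge_add_mul_le_cgf ht (hint t ht) (zero_lt_one.trans_le hatom')]
  refine ⟨fun s hs ↦ le_of_mem_subcriticalSpeeds hs fun t ht ↦
    cgf_le_log_measure_univ_add_mul ht (hint t ht) hXa, fun u hu ↦ ?_⟩
  exact le_of_forall_lt_imp_le_of_dense fun s hs ↦ hu <|
    mem_subcriticalSpeeds_of_lt hs hsteep (Real.log_pos hd') fun t ht ↦
      log_measure_ge_add_mul_le_cgf ht (hint t ht) (zero_lt_one.trans hd')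

theorem velocity_eq_esssup_general (hX : AEMeasurable X μ) (hmass : 1 < μ Set.univ)
    (hbdd : BddAbove {s | 0 < μ {ω | s ≤ X ω}})
    (hα : 1 ≤ μ {ω | sSup {s | 0 < μ {ω | s ≤ X ω}} ≤ X ω}) :
    sSup (subcriticalSpeeds (cgf X μ)) = sSup {s | 0 < μ {ω | s ≤ X ω}} := by
  have hlub := isLUB_subcriticalSpeeds_cgf hX hmass
    (ae_le_iff_mem_upperBounds.2 fun _ hs ↦ le_csSup hbdd hs) hα
  exact hlub.csSup_eq hlub.nonempty

end Cgf

/-- Let `μ` be a nonzero finite Borel measure on `ℝ` of total mass `> 1`, supported in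
`[-M, M]`. With `Λ(t) := log ∫ e^{t·s} dμ(s)`, `α := sup{s : μ([s,∞)) > 0}` and
`γ := sup{a : inf_{t ≥ 0}(Λ(t) - a·t) > 0}` (where positivity of the infimum means that
there is `δ > 0` with `Λ(t) - a·t ≥ δ` for all `t ≥ 0`), if in addition
`μ([α,∞)) ≥ 1` then `γ = α`. -/
theorem velocity_eq_esssup
    (μ : Measure ℝ) [IsFiniteMeasure μ] (M : ℝ)
    (hmass : 1 < μ Set.univ) (hsupp : μ (Set.Icc (-M) M)ᶜ = 0)
    (hα : 1 ≤ μ (Set.Ici (sSup {s : ℝ | 0 < μ (Set.Ici s)}))) :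
    sSup {a : ℝ | ∃ δ > 0, ∀ t ≥ (0 : ℝ),
        δ ≤ Real.log (∫ s, Real.exp (t * s) ∂μ) - a * t} =
      sSup {s : ℝ | 0 < μ (Set.Ici s)} := by
  have hle : ∀ᵐ s ∂μ, s ≤ M := Filter.Eventually.mono (mem_ae_iff.2 hsupp) fun _ hs ↦ hs.2
  exact velocity_eq_esssup_general (X := id) aemeasurable_id hmass
    ⟨M, ae_le_iff_mem_upperBounds.1 hle⟩ hα
end
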